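/- For every λ > 0, the function F : ℝⁿ → ℝ defined by F(x) = ‖Ax−b‖² + 2δ‖x‖₁‖Ax−b‖₁ + m δ² ‖x‖₁² + λ²‖x‖² is strongly convex with parameter 2λ² (i.e., x ↦ F(x) − λ²‖x‖² ... equivalently F(tx + (1−t)y) ≤ tF(x) + (1−t)F(y) − λ² t(1−t)‖x−y‖² for all x, y ∈ ℝⁿ and t ∈ [0,1]). -/

import Mathlib

/-!
Put `r = Ax - b`. Since `∑ i, (|rᵢ| + δ‖x‖₁)² = ‖r‖² + 2δ‖x‖₁‖r‖₁ + mδ²‖x‖₁²`, the unregularized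
part of `F` is a sum of squares of nonnegative convex functions, hence convex. Adding `λ²‖x‖²` to
a convex function makes it strongly convex with parameter `2λ²`, by the identity
`‖tx + (1-t)y‖² = t‖x‖² + (1-t)‖y‖² - t(1-t)‖x - y‖²`.
-/

section Convexity

variable {𝕜 E β ι : Type*} [Semiring 𝕜] [PartialOrder 𝕜] [AddCommMonoid E] [SMul 𝕜 E]
  [AddCommMonoid β] [PartialOrder β] [IsOrderedAddMonoid β] [DistribMulAction 𝕜 β]

theorem convexOn_finsetSum {s : Set E} (hs : Convex 𝕜 s) (u : Finset ι) {f : ι → E → β}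
    (hf : ∀ i ∈ u, ConvexOn 𝕜 s (f i)) : ConvexOn 𝕜 s fun x ↦ ∑ i ∈ u, f i x := by
  refine ⟨hs, fun x hx y hy a b ha hb hab ↦ ?_⟩
  calc ∑ i ∈ u, f i (a • x + b • y)
      ≤ ∑ i ∈ u, (a • f i x + b • f i y) :=
        Finset.sum_le_sum fun i hi ↦ (hf i hi).2 hx hy ha hb hab
    _ = a • ∑ i ∈ u, f i x + b • ∑ i ∈ u, f i y := by
        rw [Finset.sum_add_distrib, Finset.smul_sum, Finset.smul_sum]

end Convexity

theorem convexOn_sum_norm_piLp {ι : Type*} [Fintype ι] (p : ENNReal) (V : ι → Type*)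
    [∀ i, SeminormedAddCommGroup (V i)] [∀ i, NormedSpace ℝ (V i)] :
    ConvexOn ℝ Set.univ fun x : PiLp p V ↦ ∑ i, ‖x i‖ :=
  convexOn_finsetSum convex_univ _ fun i _ ↦
    convexOn_univ_norm.comp_linearMap (PiLp.projₗ p V i : PiLp p V →ₗ[ℝ] V i)

theorem sum_abs_add_sq {ι R : Type*} [Fintype ι] [CommRing R] [LinearOrder R]
    [IsOrderedRing R] (r : ι → R) (c : R) :
    ∑ i, (|r i| + c) ^ 2
      = ∑ i, r i ^ 2 + 2 * c * ∑ i, |r i| + (Fintype.card ι : R) * c ^ 2 := by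
  simp only [add_sq, sq_abs, Finset.sum_add_distrib, ← Finset.sum_mul, ← Finset.mul_sum,
    Finset.sum_const, Finset.card_univ, nsmul_eq_mul]
  ring

theorem convexOn_sum_abs_sub_add_sq {E ι : Type*} [AddCommGroup E] [Module ℝ E] [Fintype ι]
    {s : Set E} (A : E →ₗ[ℝ] ι → ℝ) (b : ι → ℝ) {p : E → ℝ} (hp : ConvexOn ℝ s p)
    (hp₀ : ∀ x ∈ s, 0 ≤ p x) :
    ConvexOn ℝ s fun x ↦ ∑ i, (|A x i - b i| + p x) ^ 2 := by
  refine convexOn_finsetSum hp.1 _ fun i _ ↦ ?_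
  have hres : ConvexOn ℝ s fun x ↦ |A x i - b i| :=
    ((convexOn_univ_dist (b i)).comp_linearMap ((LinearMap.proj i : (ι → ℝ) →ₗ[ℝ] ℝ) ∘ₗ A)).subset
      (Set.subset_univ s) hp.1
  exact (hres.add hp).pow (fun x hx ↦ add_nonneg (abs_nonneg _) (hp₀ x hx)) 2

theorem strongConvexOn_add_mul_norm_sq_iff {E : Type*} [NormedAddCommGroup E]
    [InnerProductSpace ℝ E] {s : Set E} {f : E → ℝ} {c : ℝ} :
    StrongConvexOn s (2 * c) (fun x ↦ f x + c * ‖x‖ ^ 2) ↔ ConvexOn ℝ s f := by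
  simp [strongConvexOn_iff_convex]

theorem apply_le_of_strongConvexOn_euclideanSpace {κ : Type*} [Fintype κ] {f : (κ → ℝ) → ℝ} {c : ℝ}
    (hf : StrongConvexOn Set.univ (2 * c) fun x : EuclideanSpace ℝ κ ↦ f x.ofLp)
    (x y : κ → ℝ) {t : ℝ} (ht : t ∈ Set.Icc (0 : ℝ) 1) :
    f (t • x + (1 - t) • y)
      ≤ t * f x + (1 - t) * f y - c * t * (1 - t) * ∑ j, (x j - y j) ^ 2 := by
  have h := hf.2 (Set.mem_univ (WithLp.toLp 2 x)) (Set.mem_univ (WithLp.toLp 2 y)) ht.1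
    (sub_nonneg.2 ht.2) (add_sub_cancel t 1)
  simp only [EuclideanSpace.real_norm_sq_eq, WithLp.ofLp_add, WithLp.ofLp_smul, WithLp.ofLp_sub,
    Pi.sub_apply, smul_eq_mul] at h
  linarith

theorem regularized_robust_strongly_convex_general {E ι : Type*} [NormedAddCommGroup E]
    [InnerProductSpace ℝ E] [Fintype ι] {s : Set E} (A : E →ₗ[ℝ] ι → ℝ) (b : ι → ℝ)
    {p : E → ℝ} (hp : ConvexOn ℝ s p) (hp₀ : ∀ x ∈ s, 0 ≤ p x) {δ : ℝ} (hδ : 0 ≤ δ) (c : ℝ) :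
    StrongConvexOn s (2 * c) fun x ↦
      ∑ i, (A x i - b i) ^ 2 + 2 * δ * p x * ∑ i, |A x i - b i|
        + (Fintype.card ι : ℝ) * δ ^ 2 * p x ^ 2 + c * ‖x‖ ^ 2 := by
  rw [strongConvexOn_add_mul_norm_sq_iff]
  simpa only [sum_abs_add_sq, Pi.smul_apply, smul_eq_mul, mul_pow, mul_assoc] using
    convexOn_sum_abs_sub_add_sq A b (hp.smul hδ) fun x hx ↦ mul_nonneg hδ (hp₀ x hx)

/-- For `λ > 0`, the function
`F(x) = ‖Ax−b‖² + 2δ‖x‖₁‖Ax−b‖₁ + mδ²‖x‖₁² + λ²‖x‖²` is strongly convex with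
parameter `2λ²`:
`F(tx + (1−t)y) ≤ tF(x) + (1−t)F(y) − λ² t(1−t)‖x−y‖²` for `t ∈ [0,1]`. -/
theorem regularized_robust_strongly_convex
    (m n : ℕ) (hm : 0 < m) (hn : 0 < n)
    (A : Matrix (Fin m) (Fin n) ℝ) (b : Fin m → ℝ)
    (δ : ℝ) (hδ : 0 ≤ δ) (lam : ℝ) (hlam : 0 < lam)
    (F : (Fin n → ℝ) → ℝ)
    (hF : ∀ z : Fin n → ℝ, F z =
      (∑ i, (A.mulVec z i - b i) ^ 2)
      + 2 * δ * (∑ j, |z j|) * (∑ i, |A.mulVec z i - b i|)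
      + (m : ℝ) * δ ^ 2 * (∑ j, |z j|) ^ 2
      + lam ^ 2 * ∑ j, (z j) ^ 2) :
    ∀ x y : Fin n → ℝ, ∀ t : ℝ, t ∈ Set.Icc (0 : ℝ) 1 →
      F (t • x + (1 - t) • y)
        ≤ t * F x + (1 - t) * F y
          - lam ^ 2 * t * (1 - t) * ∑ j, (x j - y j) ^ 2 := by
  refine fun x y t ht ↦ apply_le_of_strongConvexOn_euclideanSpace ?_ x y ht
  simpa [hF, EuclideanSpace.real_norm_sq_eq] using regularized_robust_strongly_convex_general
    (A.mulVecLin ∘ₗ (WithLp.linearEquiv 2 ℝ (Fin n → ℝ)).toLinearMap) b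
    (convexOn_sum_norm_piLp 2 fun _ ↦ ℝ) (fun _ _ ↦ by positivity) hδ (lam ^ 2)
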